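/- Let D be a semi-Heyting sublattice of a bounded distributive lattice E, let a, b ∈ E, set B := BR(D) ⊆ BR(E), and assume: E is generated as a lattice by D ∪ {a, b}; a ∧ b = 0; the elements a_B, b_B, (a ∨ b)_B, a^B, b^B all exist relative to B; and (a ∨ b)_B = a_B ∨ b_B. Let L be a distributive 0-lattice and f : D → L a 0-lattice homomorphism. Let D' be a finite semi-Heyting sublattice of D with {a_B, b_B} ⊆ BR(D') and {a^B, b^B} ⊆ D', and let e⃗ = (e_p)_{p ∈ Ji(D')} be a consonance kernel of f' := f↾_{D'}. Then, setting f'_{e⃗}(c) := ⋁{e_p : p ∈ Ji(D'), p ≤ p_* ∨ c} for c ∈ E, the pair (α, β) := (f'_{e⃗}(a), f'_{e⃗}(b)) satisfies α ≤ f(a^B), β ≤ f(b^B), α ∧ β = 0, BR(f)(a_B) ≤ α, and BR(f)(b_B) ≤ β; consequently there is a lattice homomorphism g : E → L extending f with g(a) = α and g(b) = β. -/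

import Mathlib

/-- Membership in the sublattice generated by a subset `S`. -/
inductive LatClosure {E : Type*} [Lattice E] (S : Set E) : E → Prop
  | base {x : E} (hx : x ∈ S) : LatClosure S x
  | sup {x y : E} : LatClosure S x → LatClosure S y → LatClosure S (x ⊔ y)
  | inf {x y : E} : LatClosure S x → LatClosure S y → LatClosure S (x ⊓ y)

/-- Membership in the generalized Boolean subalgebra generated by a subset `S`. -/
inductive GBAClosure {C : Type*} [GeneralizedBooleanAlgebra C] (S : Set C) : C → Prop
  | base {x : C} (hx : x ∈ S) : GBAClosure S x
  | bot : GBAClosure S ⊥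
  | sup {x y : C} : GBAClosure S x → GBAClosure S y → GBAClosure S (x ⊔ y)
  | inf {x y : C} : GBAClosure S x → GBAClosure S y → GBAClosure S (x ⊓ y)
  | sdiff {x y : C} : GBAClosure S x → GBAClosure S y → GBAClosure S (x \ y)

/-- The set of join-irreducible elements of a sublattice `S` (viewed as a subset). -/
def JiSet {E : Type*} [Lattice E] [OrderBot E] (S : Set E) : Set E :=
  {p | p ∈ S ∧ p ≠ ⊥ ∧ ∀ x ∈ S, ∀ y ∈ S, p = x ⊔ y → p = x ∨ p = y}

/-!
By distributivity and `a ⊓ b = ⊥`, every element of `E` has a normal form `u ⊔ v ⊓ a ⊔ w ⊓ b` with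
`u, v, w ∈ D`. The extension `g` is obtained through its graph, the sublattice of `E × L` generated
by the graph of `f` together with `(a, α)` and `(b, β)`: that it is the graph of a function can be
read off the normal forms, as soon as inequalities `y ⊓ c ≤ u` and `x ≤ u ⊔ c` in `E` pass to `L`.
The former are controlled by the upper approximations `a^B` and `b^B`, the latter by the lower ones.

The lower bound `BR(f)(a_B) ≤ α` holds since `p \ p_*`, for `p` join-irreducible in `D'`, is an atom
of `BR(D')`: if it lies below `a_B` then `p ≤ p_* ⊔ a`, so that `e_p` is one of the terms of `α`.
For `α ⊓ β = ⊥`, if `p ≤ p_* ⊔ a` and `q ≤ q_* ⊔ b`, then `p ≤ q` is impossible: `q ≤ b^B` because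
`q` is join-prime in `D'`, while `p ⊓ b ≤ p_*` yields `p ⊓ b^B ≤ p_*`.
-/

open Set

section NormalForm

variable {E : Type*} [DistribLattice E]

theorem normalForm_sup_normalForm (a b u v w u' v' w' : E) :
    (u ⊔ v ⊓ a ⊔ w ⊓ b) ⊔ (u' ⊔ v' ⊓ a ⊔ w' ⊓ b) =
      u ⊔ u' ⊔ (v ⊔ v') ⊓ a ⊔ (w ⊔ w') ⊓ b := by
  simp only [inf_sup_right]
  ac_rfl

variable [OrderBot E] {a b : E}

theorem normalForm_inf_normalForm (hab : Disjoint a b) (u v w u' v' w' : E) :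
    (u ⊔ v ⊓ a ⊔ w ⊓ b) ⊓ (u' ⊔ v' ⊓ a ⊔ w' ⊓ b) =
      u ⊓ u' ⊔ (u ⊓ v' ⊔ v ⊓ u' ⊔ v ⊓ v') ⊓ a ⊔ (u ⊓ w' ⊔ w ⊓ u' ⊔ w ⊓ w') ⊓ b := by
  have hab₀ (x y : E) : x ⊓ a ⊓ (y ⊓ b) = ⊥ :=
    (hab.mono inf_le_right inf_le_right).eq_bot
  have hba₀ (x y : E) : x ⊓ b ⊓ (y ⊓ a) = ⊥ :=
    (hab.symm.mono inf_le_right inf_le_right).eq_bot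
  have hidem (x y c : E) : x ⊓ c ⊓ (y ⊓ c) = x ⊓ y ⊓ c := by
    rw [inf_inf_inf_comm, inf_idem]
  simp only [inf_sup_left, inf_sup_right, hab₀, hba₀, hidem, sup_bot_eq]
  ac_rfl

theorem inf_le_sup_of_inf_le_normalForm (hab : Disjoint a b) {u v w y : E}
    (h : y ⊓ a ≤ u ⊔ v ⊓ a ⊔ w ⊓ b) : y ⊓ a ≤ u ⊔ v :=
  (Disjoint.left_le_of_le_sup_right h (hab.mono inf_le_right inf_le_right)).trans
    (sup_le_sup_left inf_le_left u)

theorem le_normalForm_of_le_sup (hab : Disjoint a b) {x u v w : E} (hx : x ≤ u ⊔ (a ⊔ b))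
    (hxb : x ≤ u ⊔ v ⊔ b) (hxa : x ≤ u ⊔ w ⊔ a) : x ≤ u ⊔ v ⊓ a ⊔ w ⊓ b := by
  rw [sup_assoc] at hxa hxb ⊢
  calc x ≤ (u ⊔ (a ⊔ b)) ⊓ (u ⊔ (v ⊔ b)) ⊓ (u ⊔ (w ⊔ a)) := le_inf (le_inf hx hxb) hxa
    _ = u ⊔ (v ⊓ a ⊔ b) ⊓ (w ⊔ a) := by
      rw [← sup_inf_left, ← sup_inf_left, ← sup_inf_right, inf_comm a]
    _ = u ⊔ (v ⊓ a ⊔ w ⊓ b) := by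
      rw [inf_sup_right, inf_sup_left b, inf_comm b a, hab.eq_bot, sup_bot_eq, inf_comm b,
        inf_eq_left.2 (inf_le_right.trans le_sup_right)]

end NormalForm

namespace LatClosure

theorem isSublattice {E : Type*} [Lattice E] (S : Set E) : IsSublattice {x | LatClosure S x} :=
  ⟨fun _ hx _ hy => .sup hx hy, fun _ hx _ hy => .inf hx hy⟩

theorem image_subset {E F : Type*} [Lattice E] [Lattice F] (h : LatticeHom E F) (S : Set E) :
    {y | LatClosure (h '' S) y} ⊆ h '' {x | LatClosure S x} := by
  intro y hy
  induction hy with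
  | base hy => exact image_mono (fun _ => .base) hy
  | sup _ _ ih ih' => exact ((isSublattice S).image h).supClosed ih ih'
  | inf _ _ ih ih' => exact ((isSublattice S).image h).infClosed ih ih'

theorem exists_normalForm {E : Type*} [DistribLattice E] [OrderBot E] {D : Set E}
    (hD : IsSublattice D) (hbot : ⊥ ∈ D) {a b s t : E} (hab : Disjoint a b)
    (hs : s ∈ D) (has : a ≤ s) (ht : t ∈ D) (hbt : b ≤ t) {x : E}
    (hx : LatClosure (D ∪ {a, b}) x) :
    ∃ u ∈ D, ∃ v ∈ D, ∃ w ∈ D, x = u ⊔ v ⊓ a ⊔ w ⊓ b := by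
  have sup {x y : E} (hx : x ∈ D) (hy : y ∈ D) : x ⊔ y ∈ D := hD.supClosed hx hy
  have inf {x y : E} (hx : x ∈ D) (hy : y ∈ D) : x ⊓ y ∈ D := hD.infClosed hx hy
  induction hx with
  | base hx =>
    rcases hx with hx | rfl | rfl
    · exact ⟨_, hx, ⊥, hbot, ⊥, hbot, by simp⟩
    · exact ⟨⊥, hbot, s, hs, ⊥, hbot, by simp [has]⟩
    · exact ⟨⊥, hbot, ⊥, hbot, t, ht, by simp [hbt]⟩
  | sup _ _ ih ih' =>
    obtain ⟨u, hu, v, hv, w, hw, rfl⟩ := ih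
    obtain ⟨u', hu', v', hv', w', hw', rfl⟩ := ih'
    exact ⟨_, sup hu hu', _, sup hv hv', _, sup hw hw', normalForm_sup_normalForm ..⟩
  | inf _ _ ih ih' =>
    obtain ⟨u, hu, v, hv, w, hw, rfl⟩ := ih
    obtain ⟨u', hu', v', hv', w', hw', rfl⟩ := ih'
    exact ⟨_, inf hu hu', _, sup (sup (inf hu hv') (inf hv hu')) (inf hv hv'),
      _, sup (sup (inf hu hw') (inf hw hu')) (inf hw hw'), normalForm_inf_normalForm hab ..⟩

end LatClosure

theorem exists_latticeHom_of_graph {E L : Type*} [Lattice E] [Lattice L] {G : Set (E × L)}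
    (hG : IsSublattice G) (hinj : InjOn Prod.fst G) (hsurj : SurjOn Prod.fst G univ) :
    ∃ g : LatticeHom E L, ∀ p ∈ G, g p.1 = p.2 := by
  have htotal (x : E) : ∃ y, (x, y) ∈ G := by
    obtain ⟨⟨_, y⟩, hp, rfl⟩ := hsurj (mem_univ x)
    exact ⟨y, hp⟩
  choose g hg using htotal
  have hgraph {p : E × L} (hp : p ∈ G) : g p.1 = p.2 := congrArg Prod.snd (hinj (hg p.1) hp rfl)
  exact ⟨⟨⟨g, fun x y => hgraph (hG.supClosed (hg x) (hg y))⟩,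
    fun x y => hgraph (hG.infClosed (hg x) (hg y))⟩, fun _ => hgraph⟩

/-- `f` restricts to a lattice homomorphism on the sublattice `D`. -/
def IsLatticeHomOn {E L : Type*} [Lattice E] [Lattice L] (f : E → L) (D : Set E) : Prop :=
  ∀ x ∈ D, ∀ y ∈ D, f (x ⊔ y) = f x ⊔ f y ∧ f (x ⊓ y) = f x ⊓ f y

namespace IsLatticeHomOn

variable {E L : Type*} [Lattice E] [Lattice L] {f : E → L} {D : Set E}

theorem map_sup (hf : IsLatticeHomOn f D) {x y : E} (hx : x ∈ D) (hy : y ∈ D) :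
    f (x ⊔ y) = f x ⊔ f y :=
  (hf x hx y hy).1

theorem map_inf (hf : IsLatticeHomOn f D) {x y : E} (hx : x ∈ D) (hy : y ∈ D) :
    f (x ⊓ y) = f x ⊓ f y :=
  (hf x hx y hy).2

theorem monotoneOn (hf : IsLatticeHomOn f D) : MonotoneOn f D := fun x hx y hy h => by
  rw [← sup_eq_right, ← hf.map_sup hx hy, sup_eq_right.2 h]

theorem isSublattice_graphOn (hf : IsLatticeHomOn f D) (hD : IsSublattice D) :
    IsSublattice (D.graphOn f) := by
  constructor
  · rintro _ ⟨x, hx, rfl⟩ _ ⟨y, hy, rfl⟩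
    exact ⟨x ⊔ y, hD.supClosed hx hy, Prod.ext rfl (hf.map_sup hx hy)⟩
  · rintro _ ⟨x, hx, rfl⟩ _ ⟨y, hy, rfl⟩
    exact ⟨x ⊓ y, hD.infClosed hx hy, Prod.ext rfl (hf.map_inf hx hy)⟩

end IsLatticeHomOn

/-- Sending `c` to `γ` is compatible with the inequalities `y ⊓ c ≤ u` between `c` and elements of
`D`: a necessary condition for extending `f : D → L` to a homomorphism with `c ↦ γ`. -/
def InfCompatible {E L : Type*} [SemilatticeInf E] [SemilatticeInf L] (D : Set E) (f : E → L)
    (c : E) (γ : L) : Prop :=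
  ∀ y ∈ D, ∀ u ∈ D, y ⊓ c ≤ u → f y ⊓ γ ≤ f u

/-- Sending `c` to `γ` is compatible with the inequalities `x ≤ u ⊔ c` between `c` and elements of
`D`: the order dual of `InfCompatible`. -/
def SupCompatible {E L : Type*} [SemilatticeSup E] [SemilatticeSup L] (D : Set E) (f : E → L)
    (c : E) (γ : L) : Prop :=
  ∀ x ∈ D, ∀ u ∈ D, x ≤ u ⊔ c → f x ≤ f u ⊔ γ

section Compatible

variable {E L : Type*} [DistribLattice E] [DistribLattice L]
  {D : Set E} {f : E → L} {a b : E} {α β : L}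

theorem InfCompatible.map_inf_le_normalForm [OrderBot E] (hD : IsSublattice D)
    (hf : IsLatticeHomOn f D) (hab : Disjoint a b) (ha : InfCompatible D f a α) {y u v w : E}
    (hy : y ∈ D) (hu : u ∈ D) (hv : v ∈ D) (h : y ⊓ a ≤ u ⊔ v ⊓ a ⊔ w ⊓ b) :
    f y ⊓ α ≤ f u ⊔ f v ⊓ α := by
  have hle : f y ⊓ α ≤ f u ⊔ f v := by
    rw [← hf.map_sup hu hv]
    exact ha y hy _ (hD.supClosed hu hv) (inf_le_sup_of_inf_le_normalForm hab h)
  calc f y ⊓ α ≤ (f u ⊔ f v) ⊓ α := le_inf hle inf_le_right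
    _ = f u ⊓ α ⊔ f v ⊓ α := inf_sup_right ..
    _ ≤ f u ⊔ f v ⊓ α := sup_le_sup_right inf_le_left _

variable [OrderBot L]

theorem SupCompatible.map_le_normalForm (hD : IsSublattice D) (hf : IsLatticeHomOn f D)
    (hαβ : Disjoint α β) (ha : SupCompatible D f a α) (hb : SupCompatible D f b β)
    (hsup : SupCompatible D f (a ⊔ b) (α ⊔ β)) {x u v w : E} (hx : x ∈ D) (hu : u ∈ D)
    (hv : v ∈ D) (hw : w ∈ D) (h : x ≤ u ⊔ v ⊓ a ⊔ w ⊓ b) :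
    f x ≤ f u ⊔ f v ⊓ α ⊔ f w ⊓ β := by
  apply le_normalForm_of_le_sup hαβ
  · refine hsup x hx u hu (h.trans ?_)
    rw [sup_assoc]
    exact sup_le_sup_left (sup_le_sup inf_le_right inf_le_right) u
  · rw [← hf.map_sup hu hv]
    exact hb x hx _ (hD.supClosed hu hv)
      (h.trans (sup_le_sup (sup_le_sup_left inf_le_left u) inf_le_right))
  · rw [← hf.map_sup hu hw]
    refine ha x hx _ (hD.supClosed hu hw) (h.trans ?_)
    rw [sup_right_comm]
    exact sup_le_sup (sup_le_sup_left inf_le_left u) inf_le_right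

variable [OrderBot E]

theorem normalForm_le_normalForm_of_compatible (hD : IsSublattice D) (hf : IsLatticeHomOn f D)
    (hab : Disjoint a b) (hαβ : Disjoint α β)
    (hainf : InfCompatible D f a α) (hbinf : InfCompatible D f b β)
    (hasup : SupCompatible D f a α) (hbsup : SupCompatible D f b β)
    (hsup : SupCompatible D f (a ⊔ b) (α ⊔ β)) {u v w u' v' w' : E}
    (hu : u ∈ D) (hv : v ∈ D) (hw : w ∈ D) (hu' : u' ∈ D) (hv' : v' ∈ D) (hw' : w' ∈ D)
    (h : u ⊔ v ⊓ a ⊔ w ⊓ b ≤ u' ⊔ v' ⊓ a ⊔ w' ⊓ b) :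
    f u ⊔ f v ⊓ α ⊔ f w ⊓ β ≤ f u' ⊔ f v' ⊓ α ⊔ f w' ⊓ β := by
  obtain ⟨⟨hle_u, hle_v⟩, hle_w⟩ := by simpa only [sup_le_iff] using h
  refine sup_le (sup_le ?_ ?_) ?_
  · exact hasup.map_le_normalForm hD hf hαβ hbsup hsup hu hu' hv' hw' hle_u
  · exact (hainf.map_inf_le_normalForm hD hf hab hv hu' hv' hle_v).trans le_sup_left
  · rw [sup_right_comm] at hle_w ⊢
    exact (hbinf.map_inf_le_normalForm hD hf hab.symm hw hu' hw' hle_w).trans le_sup_left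

theorem exists_latticeHom_of_compatible (hD : IsSublattice D) (hbot : ⊥ ∈ D)
    (hgen : ∀ x, LatClosure (D ∪ {a, b}) x) (hab : Disjoint a b)
    (hf : IsLatticeHomOn f D) (hf0 : f ⊥ = ⊥) (hαβ : Disjoint α β) {s t : E}
    (hs : s ∈ D) (has : a ≤ s) (hαs : α ≤ f s) (ht : t ∈ D) (hbt : b ≤ t) (hβt : β ≤ f t)
    (hainf : InfCompatible D f a α) (hbinf : InfCompatible D f b β)
    (hasup : SupCompatible D f a α) (hbsup : SupCompatible D f b β)
    (hsup : SupCompatible D f (a ⊔ b) (α ⊔ β)) :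
    ∃ g : LatticeHom E L, (∀ x ∈ D, g x = f x) ∧ g a = α ∧ g b = β := by
  let S : Set (E × L) := D.graphOn f ∪ {(a, α), (b, β)}
  have hdisj : Disjoint (a, α) (b, β) := Prod.disjoint_iff.2 ⟨hab, hαβ⟩
  have hnf {p : E × L} (hp : LatClosure S p) : ∃ u ∈ D, ∃ v ∈ D, ∃ w ∈ D,
      p = (u ⊔ v ⊓ a ⊔ w ⊓ b, f u ⊔ f v ⊓ α ⊔ f w ⊓ β) := by
    obtain ⟨_, ⟨u, hu, rfl⟩, _, ⟨v, hv, rfl⟩, _, ⟨w, hw, rfl⟩, hp⟩ :=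
      LatClosure.exists_normalForm (hf.isSublattice_graphOn hD) ⟨⊥, hbot, Prod.ext rfl hf0⟩ hdisj
        (mem_image_of_mem _ hs) ⟨has, hαs⟩ (mem_image_of_mem _ ht) ⟨hbt, hβt⟩ hp
    exact ⟨u, hu, v, hv, w, hw, hp⟩
  have hinj : InjOn Prod.fst {p | LatClosure S p} := by
    intro p hp q hq hpq
    obtain ⟨u, hu, v, hv, w, hw, rfl⟩ := hnf hp
    obtain ⟨u', hu', v', hv', w', hw', rfl⟩ := hnf hq
    refine Prod.ext hpq (le_antisymm ?_ ?_)
    · exact normalForm_le_normalForm_of_compatible hD hf hab hαβ hainf hbinf hasup hbsup hsup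
        hu hv hw hu' hv' hw' hpq.le
    · exact normalForm_le_normalForm_of_compatible hD hf hab hαβ hainf hbinf hasup hbsup hsup
        hu' hv' hw' hu hv hw hpq.ge
  have hsurj : SurjOn Prod.fst {p | LatClosure S p} univ := by
    have hS : Prod.fst '' S = D ∪ {a, b} := by
      rw [image_union, image_fst_graphOn, image_pair]
    intro x _
    exact LatClosure.image_subset LatticeHom.fst S (hS ▸ hgen x)
  obtain ⟨g, hg⟩ := exists_latticeHom_of_graph (LatClosure.isSublattice S) hinj hsurj
  exact ⟨g, fun x hx => hg (x, f x) (.base (.inl ⟨x, hx, rfl⟩)),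
    hg (a, α) (.base (.inr (.inl rfl))), hg (b, β) (.base (.inr (.inr rfl)))⟩

end Compatible

namespace GBAClosure

variable {C : Type*} [GeneralizedBooleanAlgebra C]

theorem mono {S T : Set C} (h : S ⊆ T) {z : C} (hz : GBAClosure S z) : GBAClosure T z := by
  induction hz with
  | base hx => exact .base (h hx)
  | bot => exact .bot
  | sup _ _ ih ih' => exact .sup ih ih'
  | inf _ _ ih ih' => exact .inf ih ih'
  | sdiff _ _ ih ih' => exact .sdiff ih ih'

theorem le_or_disjoint {S : Set C} {c : C} (h : ∀ x ∈ S, c ≤ x ∨ Disjoint c x) {z : C}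
    (hz : GBAClosure S z) : c ≤ z ∨ Disjoint c z := by
  induction hz with
  | base hx => exact h _ hx
  | bot => exact .inr disjoint_bot_right
  | sup _ _ ih ih' =>
    rcases ih, ih' with ⟨hx | hx, hy | hy⟩
    · exact .inl (hx.trans le_sup_left)
    · exact .inl (hx.trans le_sup_left)
    · exact .inl (hy.trans le_sup_right)
    · exact .inr (hx.sup_right hy)
  | inf _ _ ih ih' =>
    rcases ih with hx | hx
    · exact ih'.imp (le_inf hx) fun hy => hy.mono_right inf_le_right
    · exact .inr (hx.mono_right inf_le_left)
  | sdiff _ _ ih ih' =>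
    rcases ih with hx | hx
    · exact ih'.symm.imp (fun hy => le_sdiff.2 ⟨hx, hy⟩) disjoint_sdiff_self_right.mono_left
    · exact .inr (hx.mono_right sdiff_le)

end GBAClosure

/-- `F` restricts to a homomorphism of generalized Boolean algebras on the subalgebra generated by
`S`. With `S = j '' D`, this is how `BR(f) : BR(D) → BR(L)` is encoded. -/
def IsGBAHomOn {C M : Type*} [GeneralizedBooleanAlgebra C] [GeneralizedBooleanAlgebra M]
    (F : C → M) (S : Set C) : Prop :=
  ∀ c c', GBAClosure S c → GBAClosure S c' →
    F (c ⊔ c') = F c ⊔ F c' ∧ F (c ⊓ c') = F c ⊓ F c' ∧ F (c \ c') = F c \ F c'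

namespace IsGBAHomOn

variable {C M : Type*} [GeneralizedBooleanAlgebra C] [GeneralizedBooleanAlgebra M]
  {F : C → M} {S T : Set C} {c c' : C}

theorem mono (hF : IsGBAHomOn F T) (h : S ⊆ T) : IsGBAHomOn F S :=
  fun c c' hc hc' => hF c c' (hc.mono h) (hc'.mono h)

theorem map_sup (hF : IsGBAHomOn F S) (hc : GBAClosure S c) (hc' : GBAClosure S c') :
    F (c ⊔ c') = F c ⊔ F c' :=
  (hF c c' hc hc').1

theorem map_sdiff (hF : IsGBAHomOn F S) (hc : GBAClosure S c) (hc' : GBAClosure S c') :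
    F (c \ c') = F c \ F c' :=
  (hF c c' hc hc').2.2

theorem map_bot (hF : IsGBAHomOn F S) : F ⊥ = ⊥ := by
  simpa only [_root_.sdiff_self] using hF.map_sdiff .bot .bot

theorem map_le_map (hF : IsGBAHomOn F S) (hc : GBAClosure S c) (hc' : GBAClosure S c')
    (h : c ≤ c') : F c ≤ F c' := by
  rw [← sup_eq_right, ← hF.map_sup hc hc', sup_eq_right.2 h]

theorem map_le_of_forall_map_inf_le (hF : IsGBAHomOn F S) (hc : GBAClosure S c) {m : M}
    (h : ∀ x ∈ S, F (c ⊓ x) ≤ m) : F c ≤ m := by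
  suffices hinf : ∀ z, GBAClosure S z → F (c ⊓ z) ≤ m by
    simpa only [inf_idem] using hinf c hc
  intro z hz
  induction hz with
  | base hx => exact h _ hx
  | bot => simp only [inf_bot_eq, hF.map_bot, bot_le]
  | sup hx hy ihx ihy =>
    rw [inf_sup_left, hF.map_sup (.inf hc hx) (.inf hc hy)]
    exact sup_le ihx ihy
  | inf hx hy ihx _ =>
    exact (hF.map_le_map (.inf hc (.inf hx hy)) (.inf hc hx)
      (inf_le_inf_left c inf_le_left)).trans ihx
  | sdiff hx hy ihx _ =>
    exact (hF.map_le_map (.inf hc (.sdiff hx hy)) (.inf hc hx)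
      (inf_le_inf_left c sdiff_le)).trans ihx

end IsGBAHomOn

section Approximation

theorem map_le_map_iff_of_injective {E C : Type*} [Lattice E] [Lattice C] {j : LatticeHom E C}
    (hj : Function.Injective j) {x y : E} : j x ≤ j y ↔ x ≤ y :=
  (orderEmbeddingOfInjective j hj).le_iff_le

variable {E L C M : Type*} [Lattice E] [Lattice L] [GeneralizedBooleanAlgebra C]
  [GeneralizedBooleanAlgebra M] {D : Set E} {j : LatticeHom E C} {c d : E}

theorem inf_le_of_isLeast (hj : Function.Injective j) (hd : d ∈ D)
    (hcd : IsLeast {z | GBAClosure (j '' D) z ∧ j c ≤ z} (j d)) {y u : E} (hy : y ∈ D)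
    (hu : u ∈ D) (h : y ⊓ c ≤ u) : y ⊓ d ≤ u := by
  have hmem {x : E} (hx : x ∈ D) : GBAClosure (j '' D) (j x) := .base (mem_image_of_mem j hx)
  have hiff (x : E) : Disjoint (j x) (j y \ j u) ↔ y ⊓ x ≤ u := by
    rw [disjoint_iff, ← inf_sdiff_assoc, sdiff_eq_bot_iff, ← map_inf, inf_comm,
      map_le_map_iff_of_injective hj]
  have hle : j d ≤ j d \ (j y \ j u) :=
    hcd.2 ⟨.sdiff (hmem hd) (.sdiff (hmem hy) (hmem hu)), le_sdiff.2 ⟨hcd.1.2, (hiff c).2 h⟩⟩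
  exact (hiff d).1 (le_sdiff.1 hle).2

theorem InfCompatible.of_isLeast {f : E → L} {γ : L} (hD : InfClosed D)
    (hf : IsLatticeHomOn f D) (hj : Function.Injective j) (hd : d ∈ D)
    (hcd : IsLeast {z | GBAClosure (j '' D) z ∧ j c ≤ z} (j d)) (hγ : γ ≤ f d) :
    InfCompatible D f c γ := fun y hy u hu h =>
  calc f y ⊓ γ ≤ f y ⊓ f d := inf_le_inf_left _ hγ
    _ = f (y ⊓ d) := (hf.map_inf hy hd).symm
    _ ≤ f u := hf.monotoneOn (hD hy hd) hu (inf_le_of_isLeast hj hd hcd hy hu h)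

theorem SupCompatible.of_isGreatest {f : E → L} {γ : L} {jL : LatticeHom L M} {F : C → M}
    (hjL : Function.Injective jL) (hF : IsGBAHomOn F (j '' D))
    (hFj : ∀ x ∈ D, F (j x) = jL (f x)) {z : C}
    (hz : IsGreatest {z | GBAClosure (j '' D) z ∧ z ≤ j c} z) (hγ : F z ≤ jL γ) :
    SupCompatible D f c γ := by
  intro x hx u hu h
  have hx' : GBAClosure (j '' D) (j x) := .base (mem_image_of_mem j hx)
  have hu' : GBAClosure (j '' D) (j u) := .base (mem_image_of_mem j hu)
  have hle : j x \ j u ≤ z := hz.2 ⟨.sdiff hx' hu', sdiff_le_iff.2 <| by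
    rw [← map_sup]
    exact OrderHomClass.mono j h⟩
  rw [← map_le_map_iff_of_injective hjL, map_sup, ← sdiff_le_iff, ← hFj x hx, ← hFj u hu,
    ← hF.map_sdiff hx' hu']
  exact (hF.map_le_map (.sdiff hx' hu') hz.1.1 hle).trans hγ

end Approximation

namespace JiSet

theorem le_or_le {E : Type*} [DistribLattice E] [OrderBot E] {S : Set E} (hS : InfClosed S)
    {p x y : E} (hp : p ∈ JiSet S) (hx : x ∈ S) (hy : y ∈ S) (h : p ≤ x ⊔ y) :
    p ≤ x ∨ p ≤ y := by
  have hp_eq : p = p ⊓ x ⊔ p ⊓ y := by rw [← inf_sup_left, inf_eq_left.2 h]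
  exact (hp.2.2 _ (hS hp.1 hx) _ (hS hp.1 hy) hp_eq).imp
    (fun h => inf_eq_left.1 h.symm) fun h => inf_eq_left.1 h.symm

theorem induction {E : Type*} [Lattice E] [OrderBot E] {S : Set E} (hS : S.IsWF) {P : E → Prop}
    (bot : ⊥ ∈ S → P ⊥) (sup : ∀ y ∈ S, ∀ z ∈ S, P y → P z → P (y ⊔ z))
    (ji : ∀ p ∈ JiSet S, (∀ w ∈ S, w < p → P w) → P p) : ∀ x ∈ S, P x := by
  refine fun x hx => WellFoundedOn.induction hS hx fun x hx ih => ?_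
  by_cases hx0 : x = ⊥
  · exact hx0 ▸ bot (hx0 ▸ hx)
  by_cases hxJ : x ∈ JiSet S
  · exact ji x hxJ ih
  · simp only [JiSet, mem_ofPred_eq, not_and, not_forall, not_or] at hxJ
    obtain ⟨y, hy, z, hz, rfl, hyne, hzne⟩ := hxJ hx hx0
    exact sup y hy z hz (ih y hy (le_sup_left.lt_of_ne' hyne))
      (ih z hz (le_sup_right.lt_of_ne' hzne))

end JiSet

theorem GBAClosure.sdiff_le_or_disjoint {E C : Type*} [Lattice E] [GeneralizedBooleanAlgebra C]
    {S : Set E} (hS : InfClosed S) (j : LatticeHom E C) {p p' : E} (hp : p ∈ S)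
    (hp' : IsGreatest {w | w ∈ S ∧ w < p} p') {z : C} (hz : GBAClosure (j '' S) z) :
    j p \ j p' ≤ z ∨ Disjoint (j p \ j p') z := by
  refine hz.le_or_disjoint (forall_mem_image.2 fun x hx => ?_)
  by_cases hpx : p ≤ x
  · exact .inl (sdiff_le.trans (OrderHomClass.mono j hpx))
  · have hle : p ⊓ x ≤ p' := hp'.2 ⟨hS hp hx, inf_lt_left.2 hpx⟩
    rw [disjoint_comm, disjoint_iff, ← inf_sdiff_assoc, inf_comm, ← map_inf, sdiff_eq_bot_iff]
    exact .inr (OrderHomClass.mono j hle)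

theorem disjoint_of_isLUB_of_finite {L : Type*} [DistribLattice L] [OrderBot L] {s : Set L}
    (hs : s.Finite) {α β : L} (hα : IsLUB s α) (h : ∀ x ∈ s, Disjoint x β) : Disjoint α β := by
  lift s to Finset L using hs
  rw [hα.unique Finset.isLUB_sup_id, Finset.disjoint_sup_left]
  exact h

/-- `e` is a consonance kernel of the restriction of `f` to `S`, where `pstar p` is the lower cover
`p_*` in `S` of a join-irreducible element `p` of `S`. -/
structure IsConsonanceKernel {E L : Type*} [Lattice E] [OrderBot E] [Lattice L] [OrderBot L]
    (S : Set E) (f : E → L) (pstar : E → E) (e : E → L) : Prop where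
  isGreatest_pstar : ∀ p ∈ JiSet S, IsGreatest {w | w ∈ S ∧ w < p} (pstar p)
  map_eq : ∀ p ∈ JiSet S, f p = f (pstar p) ⊔ e p
  disjoint : ∀ p ∈ JiSet S, ∀ q ∈ JiSet S, ¬ p ≤ q → ¬ q ≤ p → Disjoint (e p) (e q)

/-- The set of terms `e p` whose join is `f_e(c)`. As `L` need not have infinite joins, the element
`f_e(c)` itself is referred to as a least upper bound of this set. -/
def kernelTerms {E L : Type*} [Lattice E] [OrderBot E] (S : Set E) (pstar : E → E) (e : E → L)
    (c : E) : Set L :=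
  {x | ∃ p ∈ JiSet S, p ≤ pstar p ⊔ c ∧ x = e p}

theorem finite_kernelTerms {E L : Type*} [Lattice E] [OrderBot E] {S : Set E} (hS : S.Finite)
    (pstar : E → E) (e : E → L) (c : E) : (kernelTerms S pstar e c).Finite := by
  refine (hS.image e).subset ?_
  rintro _ ⟨p, hp, -, rfl⟩
  exact mem_image_of_mem e hp.1

namespace IsConsonanceKernel

section Lattice

variable {E L C M : Type*} [Lattice E] [OrderBot E] [Lattice L] [OrderBot L]
  [GeneralizedBooleanAlgebra C] [GeneralizedBooleanAlgebra M]
  {S : Set E} {f e : E → L} {pstar : E → E}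
  {j : LatticeHom E C} {jL : LatticeHom L M} {F : C → M} {c : E} {γ : L}

theorem map_inf_sdiff_le (he : IsConsonanceKernel S f pstar e) (hS : InfClosed S)
    (hj : Function.Injective j) (hF : IsGBAHomOn F (j '' S))
    (hFj : ∀ x ∈ S, F (j x) = jL (f x)) {z : C} (hz : GBAClosure (j '' S) z) (hzc : z ≤ j c)
    (hγ : γ ∈ upperBounds (kernelTerms S pstar e c)) {p : E} (hp : p ∈ JiSet S) :
    F (z ⊓ j p \ j (pstar p)) ≤ jL γ := by
  have hstar := he.isGreatest_pstar p hp
  rcases hz.sdiff_le_or_disjoint hS j hp.1 hstar with hle | hdisj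
  · have hpc : p ≤ pstar p ⊔ c := by
      rw [← map_le_map_iff_of_injective hj, map_sup, ← sdiff_le_iff]
      exact hle.trans hzc
    have hmem {x : E} (hx : x ∈ S) : GBAClosure (j '' S) (j x) := .base (mem_image_of_mem j hx)
    rw [inf_eq_right.2 hle, hF.map_sdiff (hmem hp.1) (hmem hstar.1.1), hFj p hp.1,
      hFj _ hstar.1.1, sdiff_le_iff, he.map_eq p hp, map_sup]
    exact sup_le_sup_left (OrderHomClass.mono jL (hγ ⟨p, hp, hpc, rfl⟩)) _
  · rw [hdisj.symm.eq_bot, hF.map_bot]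
    exact bot_le

theorem map_le_of_mem_upperBounds (he : IsConsonanceKernel S f pstar e) (hS : InfClosed S)
    (hwf : S.IsWF) (hf0 : f ⊥ = ⊥) (hj : Function.Injective j) (hF : IsGBAHomOn F (j '' S))
    (hFj : ∀ x ∈ S, F (j x) = jL (f x)) {z : C} (hz : GBAClosure (j '' S) z) (hzc : z ≤ j c)
    (hγ : γ ∈ upperBounds (kernelTerms S pstar e c)) : F z ≤ jL γ := by
  have hmem {x : E} (hx : x ∈ S) : GBAClosure (j '' S) (j x) := .base (mem_image_of_mem j hx)
  refine hF.map_le_of_forall_map_inf_le hz (forall_mem_image.2 fun x hx => ?_)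
  refine JiSet.induction (P := fun x => F (z ⊓ j x) ≤ jL γ) hwf (fun hbot => ?_)
    (fun y hy y' hy' ihy ihy' => ?_) (fun p hp ih => ?_) x hx
  · calc F (z ⊓ j ⊥) ≤ F (j ⊥) :=
          hF.map_le_map (.inf hz (hmem hbot)) (hmem hbot) inf_le_right
      _ = jL ⊥ := by rw [hFj ⊥ hbot, hf0]
      _ ≤ jL γ := OrderHomClass.mono jL bot_le
  · rw [map_sup, inf_sup_left, hF.map_sup (.inf hz (hmem hy)) (.inf hz (hmem hy'))]
    exact sup_le ihy ihy'
  · obtain ⟨hstar, hlt⟩ := (he.isGreatest_pstar p hp).1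
    have hsplit : j p = j (pstar p) ⊔ j p \ j (pstar p) :=
      (sup_sdiff_cancel_right (OrderHomClass.mono j hlt.le)).symm
    rw [hsplit, inf_sup_left, hF.map_sup (.inf hz (hmem hstar))
      (.inf hz (.sdiff (hmem hp.1) (hmem hstar)))]
    exact sup_le (ih _ hstar hlt) (he.map_inf_sdiff_le hS hj hF hFj hz hzc hγ hp)

end Lattice

section DistribLattice

variable {E L : Type*} [DistribLattice E] [OrderBot E] [Lattice L] [OrderBot L]
  {S : Set E} {f e : E → L} {pstar : E → E}

theorem le_of_le_pstar_sup (he : IsConsonanceKernel S f pstar e) (hS : InfClosed S) {p c d : E}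
    (hp : p ∈ JiSet S) (hd : d ∈ S) (hcd : c ≤ d) (hpc : p ≤ pstar p ⊔ c) : p ≤ d := by
  obtain ⟨hmem, hlt⟩ := (he.isGreatest_pstar p hp).1
  exact (JiSet.le_or_le hS hp hmem hd (hpc.trans (sup_le_sup_left hcd _))).resolve_left hlt.not_ge

theorem le_map_of_isLUB (he : IsConsonanceKernel S f pstar e) (hS : InfClosed S)
    (hf : MonotoneOn f S) {c d : E} {γ : L} (hγ : IsLUB (kernelTerms S pstar e c) γ)
    (hd : d ∈ S) (hcd : c ≤ d) : γ ≤ f d := by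
  refine hγ.2 ?_
  rintro _ ⟨p, hp, hpc, rfl⟩
  calc e p ≤ f p := by rw [he.map_eq p hp]; exact le_sup_right
    _ ≤ f d := hf hp.1 hd (he.le_of_le_pstar_sup hS hp hd hcd hpc)

theorem not_le_of_disjoint (he : IsConsonanceKernel S f pstar e) (hS : InfClosed S)
    {a b d p q : E} (hab : Disjoint a b) (hd : d ∈ S) (hbd : b ≤ d)
    (hinf : ∀ {y u}, y ∈ S → u ∈ S → y ⊓ b ≤ u → y ⊓ d ≤ u)
    (hp : p ∈ JiSet S) (hpa : p ≤ pstar p ⊔ a) (hq : q ∈ JiSet S) (hqb : q ≤ pstar q ⊔ b) :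
    ¬ p ≤ q := by
  intro hpq
  obtain ⟨hmem, hlt⟩ := (he.isGreatest_pstar p hp).1
  have hpb : p ⊓ b ≤ pstar p :=
    calc p ⊓ b ≤ (pstar p ⊔ a) ⊓ b := inf_le_inf_right b hpa
      _ = pstar p ⊓ b := by rw [inf_sup_right, hab.eq_bot, sup_bot_eq]
      _ ≤ pstar p := inf_le_left
  have hpd : p ≤ d := hpq.trans (he.le_of_le_pstar_sup hS hq hd hbd hqb)
  exact hlt.not_ge ((le_inf le_rfl hpd).trans (hinf hp.1 hmem hpb))

theorem disjoint_of_isLUB {L : Type*} [DistribLattice L] [OrderBot L] {f e : E → L}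
    (he : IsConsonanceKernel S f pstar e) (hS : InfClosed S) (hfin : S.Finite) {a b s t : E}
    (hab : Disjoint a b)
    (hs : s ∈ S) (has : a ≤ s) (hsinf : ∀ {y u}, y ∈ S → u ∈ S → y ⊓ a ≤ u → y ⊓ s ≤ u)
    (ht : t ∈ S) (hbt : b ≤ t) (htinf : ∀ {y u}, y ∈ S → u ∈ S → y ⊓ b ≤ u → y ⊓ t ≤ u)
    {α β : L} (hα : IsLUB (kernelTerms S pstar e a) α)
    (hβ : IsLUB (kernelTerms S pstar e b) β) : Disjoint α β := by
  refine disjoint_of_isLUB_of_finite (finite_kernelTerms hfin pstar e a) hα ?_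
  rintro _ ⟨p, hp, hpa, rfl⟩
  refine (disjoint_of_isLUB_of_finite (finite_kernelTerms hfin pstar e b) hβ ?_).symm
  rintro _ ⟨q, hq, hqb, rfl⟩
  exact he.disjoint q hq p hp
    (he.not_le_of_disjoint hS hab.symm hs has hsinf hq hqb hp hpa)
    (he.not_le_of_disjoint hS hab ht hbt htinf hp hpa hq hqb)

end DistribLattice

end IsConsonanceKernel

theorem stmt7_general {E C L M : Type*} [DistribLattice E] [OrderBot E] [DistribLattice L]
    [OrderBot L] [GeneralizedBooleanAlgebra C] [GeneralizedBooleanAlgebra M] {D D' : Set E}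
    (hD : IsSublattice D) (hbot : ⊥ ∈ D) {j : LatticeHom E C} (hj : Function.Injective j)
    {a b : E} (hgen : ∀ x, LatClosure (D ∪ {a, b}) x) (hab : Disjoint a b) {aB bB aT bT : C}
    (haB : IsGreatest {z | GBAClosure (j '' D) z ∧ z ≤ j a} aB)
    (hbB : IsGreatest {z | GBAClosure (j '' D) z ∧ z ≤ j b} bB)
    (habB : IsGreatest {z | GBAClosure (j '' D) z ∧ z ≤ j (a ⊔ b)} (aB ⊔ bB))
    (haT : IsLeast {z | GBAClosure (j '' D) z ∧ j a ≤ z} aT)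
    (hbT : IsLeast {z | GBAClosure (j '' D) z ∧ j b ≤ z} bT)
    {f : E → L} (hf : IsLatticeHomOn f D) (hf0 : f ⊥ = ⊥)
    {jL : LatticeHom L M} (hjL : Function.Injective jL)
    {F : C → M} (hFj : ∀ x ∈ D, F (j x) = jL (f x)) (hF : IsGBAHomOn F (j '' D))
    (hsub : D' ⊆ D) (hfin : D'.Finite) (hD' : InfClosed D')
    (haB' : GBAClosure (j '' D') aB) (hbB' : GBAClosure (j '' D') bB)
    (haT' : aT ∈ j '' D') (hbT' : bT ∈ j '' D')
    {pstar : E → E} {e : E → L} (he : IsConsonanceKernel D' f pstar e) {α β : L}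
    (hα : IsLUB (kernelTerms D' pstar e a) α) (hβ : IsLUB (kernelTerms D' pstar e b) β) :
    (∀ d ∈ D, j d = aT → α ≤ f d) ∧ (∀ d ∈ D, j d = bT → β ≤ f d) ∧
      Disjoint α β ∧ F aB ≤ jL α ∧ F bB ≤ jL β ∧
      ∃ g : LatticeHom E L, (∀ x ∈ D, g x = f x) ∧ g a = α ∧ g b = β := by
  obtain ⟨s, hs, rfl⟩ := haT'
  obtain ⟨t, ht, rfl⟩ := hbT'
  have has : a ≤ s := (map_le_map_iff_of_injective hj).1 haT.1.2
  have hbt : b ≤ t := (map_le_map_iff_of_injective hj).1 hbT.1.2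
  have hf' : MonotoneOn f D' := hf.monotoneOn.mono hsub
  have hαs : α ≤ f s := he.le_map_of_isLUB hD' hf' hα hs has
  have hβt : β ≤ f t := he.le_map_of_isLUB hD' hf' hβ ht hbt
  have hαβ : Disjoint α β := he.disjoint_of_isLUB hD' hfin hab
    hs has (fun hy hu => inf_le_of_isLeast hj (hsub hs) haT (hsub hy) (hsub hu))
    ht hbt (fun hy hu => inf_le_of_isLeast hj (hsub ht) hbT (hsub hy) (hsub hu)) hα hβ
  have hlower {c : E} {γ : L} {z : C} (hz : GBAClosure (j '' D') z) (hzc : z ≤ j c)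
      (hγ : IsLUB (kernelTerms D' pstar e c) γ) : F z ≤ jL γ :=
    he.map_le_of_mem_upperBounds hD' hfin.isWF hf0 hj (hF.mono (image_mono hsub))
      (fun x hx => hFj x (hsub hx)) hz hzc hγ.1
  have hαB : F aB ≤ jL α := hlower haB' haB.1.2 hα
  have hβB : F bB ≤ jL β := hlower hbB' hbB.1.2 hβ
  have hαβB : F (aB ⊔ bB) ≤ jL (α ⊔ β) := by
    rw [hF.map_sup haB.1.1 hbB.1.1, map_sup]
    exact sup_le_sup hαB hβB
  exact ⟨fun d _ hd => hj hd ▸ hαs, fun d _ hd => hj hd ▸ hβt, hαβ, hαB, hβB,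
    exists_latticeHom_of_compatible hD hbot hgen hab hf hf0 hαβ (hsub hs) has hαs (hsub ht) hbt hβt
      (.of_isLeast hD.infClosed hf hj (hsub hs) haT hαs)
      (.of_isLeast hD.infClosed hf hj (hsub ht) hbT hβt)
      (.of_isGreatest hjL hF hFj haB hαB) (.of_isGreatest hjL hF hFj hbB hβB)
      (.of_isGreatest hjL hF hFj habB hαβB)⟩

/-- Main Extension Lemma, "moreover" part: in the setting of the Main
Extension Lemma, given a finite semi-Heyting sublattice `D'` of `D` with
`a_B, b_B ∈ BR(D')` and `a^B, b^B ∈ D'`, and a consonance kernel `e` of `f' = f↾D'`,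
the pair `(α, β) = (f'_e a, f'_e b)` (where `f'_e c = ⋁ {e p : p ∈ Ji(D'), p ≤ p_* ⊔ c}`,
expressed as a least upper bound) satisfies condition (ii), and consequently `f` extends
to a lattice homomorphism `g : E → L` with `g a = α`, `g b = β`.
Here `pstar p` is the lower cover `p_*` of `p` relative to `D'`. -/
theorem stmt7 {E C L M : Type*}
    [DistribLattice E] [BoundedOrder E] [DistribLattice L] [OrderBot L]
    [GeneralizedBooleanAlgebra C] [GeneralizedBooleanAlgebra M]
    (D : Set E) (hDbot : ⊥ ∈ D) (hDtop : ⊤ ∈ D)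
    (hDsup : ∀ x ∈ D, ∀ y ∈ D, x ⊔ y ∈ D) (hDinf : ∀ x ∈ D, ∀ y ∈ D, x ⊓ y ∈ D)
    (hSH : ∀ x ∈ D, ∀ y ∈ D, ∃ z ∈ D, IsGreatest {w : E | x ⊓ w ≤ y} z)
    (j : E → C) (hjinj : Function.Injective j)
    (hjhom : ∀ x y : E, j (x ⊔ y) = j x ⊔ j y ∧ j (x ⊓ y) = j x ⊓ j y)
    (hjbot : j ⊥ = ⊥) (hjgen : ∀ c : C, GBAClosure (Set.range j) c)
    (a b : E)
    (hgenE : ∀ x : E, LatClosure (D ∪ {a, b}) x)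
    (hab : a ⊓ b = ⊥)
    (aB bB abB aT bT : C)
    (haB : IsGreatest {z : C | GBAClosure (j '' D) z ∧ z ≤ j a} aB)
    (hbB : IsGreatest {z : C | GBAClosure (j '' D) z ∧ z ≤ j b} bB)
    (habB : IsGreatest {z : C | GBAClosure (j '' D) z ∧ z ≤ j (a ⊔ b)} abB)
    (haT : IsLeast {z : C | GBAClosure (j '' D) z ∧ j a ≤ z} aT)
    (hbT : IsLeast {z : C | GBAClosure (j '' D) z ∧ j b ≤ z} bT)
    (habB4 : abB = aB ⊔ bB)
    (f : E → L)
    (hfD : ∀ x ∈ D, ∀ y ∈ D, f (x ⊔ y) = f x ⊔ f y ∧ f (x ⊓ y) = f x ⊓ f y)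
    (hf0 : f ⊥ = ⊥)
    (jL : L → M) (hjLinj : Function.Injective jL)
    (hjLhom : ∀ x y : L, jL (x ⊔ y) = jL x ⊔ jL y ∧ jL (x ⊓ y) = jL x ⊓ jL y)
    (hjLbot : jL ⊥ = ⊥) (hjLgen : ∀ m : M, GBAClosure (Set.range jL) m)
    (F : C → M)
    (hFj : ∀ x ∈ D, F (j x) = jL (f x))
    (hFhom : ∀ c c' : C, GBAClosure (j '' D) c → GBAClosure (j '' D) c' →
      F (c ⊔ c') = F c ⊔ F c' ∧ F (c ⊓ c') = F c ⊓ F c' ∧ F (c \ c') = F c \ F c')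
    (hF0 : F ⊥ = ⊥)
    -- the finite semi-Heyting sublattice `D'` of `D`
    (D' : Set E) (hD'sub : D' ⊆ D) (hD'fin : D'.Finite)
    (hD'bot : ⊥ ∈ D') (hD'top : ⊤ ∈ D')
    (hD'sup : ∀ x ∈ D', ∀ y ∈ D', x ⊔ y ∈ D')
    (hD'inf : ∀ x ∈ D', ∀ y ∈ D', x ⊓ y ∈ D')
    (hSH' : ∀ x ∈ D', ∀ y ∈ D', ∃ z ∈ D', IsGreatest {w : E | w ∈ D ∧ x ⊓ w ≤ y} z)
    (haB' : GBAClosure (j '' D') aB) (hbB' : GBAClosure (j '' D') bB)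
    (haT' : aT ∈ j '' D') (hbT' : bT ∈ j '' D')
    -- `pstar p` is the lower cover of `p` in `D'`
    (pstar : E → E)
    (hpstar : ∀ p ∈ JiSet D', IsGreatest {w : E | w ∈ D' ∧ w < p} (pstar p))
    -- `e` is a consonance kernel of `f' = f↾D'`
    (e : E → L)
    (hker1 : ∀ p ∈ JiSet D', f p = f (pstar p) ⊔ e p)
    (hker2 : ∀ p ∈ JiSet D', ∀ q ∈ JiSet D', ¬ p ≤ q → ¬ q ≤ p → e p ⊓ e q = ⊥) :
    ∀ α β : L,
      IsLUB {x : L | ∃ p ∈ JiSet D', p ≤ pstar p ⊔ a ∧ x = e p} α →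
      IsLUB {x : L | ∃ p ∈ JiSet D', p ≤ pstar p ⊔ b ∧ x = e p} β →
      ((∀ d ∈ D, j d = aT → α ≤ f d) ∧ (∀ d ∈ D, j d = bT → β ≤ f d) ∧
        α ⊓ β = ⊥ ∧ F aB ≤ jL α ∧ F bB ≤ jL β ∧
        ∃ g : E → L,
          (∀ x y : E, g (x ⊔ y) = g x ⊔ g y ∧ g (x ⊓ y) = g x ⊓ g y) ∧
          (∀ x ∈ D, g x = f x) ∧ g a = α ∧ g b = β) := by
  intro α β hα hβ
  obtain ⟨hαT, hβT, hαβ, hαB, hβB, g, hg⟩ := stmt7_general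
    (j := ⟨⟨j, fun x y => (hjhom x y).1⟩, fun x y => (hjhom x y).2⟩)
    (jL := ⟨⟨jL, fun x y => (hjLhom x y).1⟩, fun x y => (hjLhom x y).2⟩)
    ⟨hDsup, hDinf⟩ hDbot hjinj hgenE (disjoint_iff.2 hab) haB hbB (habB4 ▸ habB) haT hbT hfD hf0
    hjLinj hFj hFhom hD'sub hD'fin hD'inf haB' hbB' haT' hbT'
    ⟨hpstar, hker1, fun p hp q hq h h' => disjoint_iff.2 (hker2 p hp q hq h h')⟩ hα hβ
  exact ⟨hαT, hβT, hαβ.eq_bot, hαB, hβB, g, fun x y => ⟨map_sup g x y, map_inf g x y⟩, hg⟩
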